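/- (Covering theorem for positive composition shells.) Let G be an abelian group and let f₁,…,f_k ∈ G. For h ∈ ℕ₀ define Σ_h(f₁,…,f_k) := {n₁f₁ + ⋯ + n_k f_k : n_j ∈ ℕ₀, n₁ + ⋯ + n_k = h}, and for h ≥ k define Σ_h^+(f₁,…,f_k) := {n₁f₁ + ⋯ + n_k f_k : n_j ∈ ℕ (all n_j ≥ 1), n₁ + ⋯ + n_k = h}. If k = 1, then for every h ∈ ℕ, Σ_{rh}(f₁) = {(r−1)h f₁} + Σ_h^+(f₁). If k ≥ 2 and h ≥ r(k−1)² + k, then there exists a set X_h ⊆ G with |X_h| ≤ C((r+1)(k−1), k−1) such that Σ_{rh}(f₁,…,f_k) ⊆ X_h + Σ_h^+(f₁,…,f_k). -/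

import Mathlib

/-!
Put `d = k - 1`, `m = h - k` and `q = ⌊m / d⌋ + 1`, so that `d * (q - 1) ≤ m < d * q`. A positive
composition of `h` is `(1, …, 1)` plus a composition of `m`. If a vector of `k` multiplicities has
sum `q * (r * d) + m`, rounding each entry down to a multiple of `q` loses in total at most
`k * (q - 1) ≤ m + (q - 1)`, so at least `r * d` full multiples of `q` remain; splitting off exactly
`r * d` of them leaves a composition of `m`. Since `m ≥ r * d` gives `r * h ≤ q * (r * d) + m`,
padding with copies of one generator brings every element of `Σ_{rh}` into this situation. Up to
translation the covering set is therefore `Σ_{rd}(q f₁, …, q f_k)`, which has at most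
`C(rd + d, d)` elements.
-/

open Pointwise BigOperators

/-- The composition shell `Σ_h(f₁,…,f_k) = {n₁f₁ + ⋯ + n_k f_k : nⱼ ∈ ℕ₀, ∑ nⱼ = h}`. -/
def shell {G : Type*} [AddCommMonoid G] {k : ℕ} (f : Fin k → G) (h : ℕ) : Set G :=
  {x | ∃ n : Fin k → ℕ, (∑ j, n j) = h ∧ x = ∑ j, n j • f j}

/-- The positive composition shell
`Σ_h^+(f₁,…,f_k) = {n₁f₁ + ⋯ + n_k f_k : nⱼ ≥ 1, ∑ nⱼ = h}`. -/
def shellPos {G : Type*} [AddCommMonoid G] {k : ℕ} (f : Fin k → G) (h : ℕ) : Set G :=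
  {x | ∃ n : Fin k → ℕ, (∀ j, 1 ≤ n j) ∧ (∑ j, n j) = h ∧ x = ∑ j, n j • f j}

open Finset

section Rounding

variable {ι : Type*}

theorem sum_le_mul_sum_div_add (s : Finset ι) (b : ι → ℕ) (q : ℕ) :
    ∑ j ∈ s, b j ≤ (q + 1) * ∑ j ∈ s, b j / (q + 1) + #s * q := by
  have hround (j : ι) : b j ≤ (q + 1) * (b j / (q + 1)) + q := by
    have := Nat.lt_mul_div_succ (b j) q.succ_pos
    rw [Nat.succ_eq_add_one, mul_add_one] at this
    omega
  calc ∑ j ∈ s, b j ≤ ∑ j ∈ s, ((q + 1) * (b j / (q + 1)) + q) := sum_le_sum fun j _ ↦ hround j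
    _ = (q + 1) * ∑ j ∈ s, b j / (q + 1) + #s * q := by
      rw [sum_add_distrib, ← mul_sum, sum_const, smul_eq_mul]

theorem le_sum_div_of_mul_add_card_mul_le {s : Finset ι} {b : ι → ℕ} {q N : ℕ}
    (h : (q + 1) * N + #s * q ≤ ∑ j ∈ s, b j + q) : N ≤ ∑ j ∈ s, b j / (q + 1) := by
  have hloss := sum_le_mul_sum_div_add s b q
  refine Nat.lt_add_one_iff.mp (lt_of_mul_lt_mul_left (a := q + 1) ?_ (Nat.zero_le _))
  rw [mul_add_one]
  omega

theorem exists_le_sum_eq [Fintype ι] (b : ι → ℕ) {N : ℕ} (hN : N ≤ ∑ j, b j) :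
    ∃ a ≤ b, ∑ j, a j = N := by
  obtain ⟨a, hab, ha⟩ := (Finsupp.equivFunOnFinite.symm b).exists_le_degree_eq N
    (by simpa [Finsupp.degree_eq_sum] using hN)
  exact ⟨a, hab, by rw [← ha, Finsupp.degree_eq_sum]⟩

theorem exists_eq_mul_add_of_sum_eq [Fintype ι] {b : ι → ℕ} {q N m : ℕ}
    (hm : Fintype.card ι * q ≤ m + q) (hb : ∑ j, b j = (q + 1) * N + m) :
    ∃ a c : ι → ℕ, ∑ j, a j = N ∧ ∑ j, c j = m ∧ ∀ j, b j = (q + 1) * a j + c j := by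
  obtain ⟨a, hab, ha⟩ := exists_le_sum_eq (fun j ↦ b j / (q + 1)) (N := N) <|
    le_sum_div_of_mul_add_card_mul_le (by rw [card_univ]; omega)
  have hle (j : ι) : (q + 1) * a j ≤ b j :=
    (Nat.mul_le_mul_left _ (hab j)).trans (Nat.mul_div_le _ _)
  choose c hc using fun j ↦ Nat.exists_eq_add_of_le (hle j)
  refine ⟨a, c, ha, ?_, hc⟩
  simp only [hc, sum_add_distrib, ← mul_sum, ha] at hb
  exact Nat.add_left_cancel hb

theorem mul_add_le_div_add_one_mul_add {d m : ℕ} (r : ℕ) (hd : 0 < d) (hm : r * d ≤ m) :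
    r * (m + (d + 1)) ≤ (m / d + 1) * (r * d) + m := by
  have hlt : m + 1 ≤ d * (m / d + 1) := Nat.lt_mul_div_succ m hd
  calc r * (m + (d + 1)) = r * (m + 1) + r * d := by ring
    _ ≤ r * (d * (m / d + 1)) + m := by gcongr
    _ = (m / d + 1) * (r * d) + m := by ring

end Rounding

section AddCommMonoid

variable {G : Type*} [AddCommMonoid G] {k : ℕ}

theorem shell_add_shell_subset (f : Fin k → G) (m n : ℕ) :
    shell f m + shell f n ⊆ shell f (m + n) := by
  rintro _ ⟨_, ⟨a, rfl, rfl⟩, _, ⟨b, rfl, rfl⟩, rfl⟩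
  exact ⟨a + b, by simp [sum_add_distrib], by simp [add_smul, sum_add_distrib]⟩

theorem nsmul_mem_shell (f : Fin k → G) (i : Fin k) (n : ℕ) : n • f i ∈ shell f n :=
  ⟨Pi.single i n, by simp, by simp [Pi.single_apply, ite_smul]⟩

theorem shellPos_add_card (f : Fin k → G) (m : ℕ) :
    shellPos f (m + k) = {∑ j, f j} + shell f m := by
  rw [Set.singleton_add]
  ext x
  constructor
  · rintro ⟨n, hpos, hn, rfl⟩
    obtain ⟨c, rfl⟩ : ∃ c, n = 1 + c := exists_add_of_le hpos
    refine ⟨∑ j, c j • f j, ⟨c, ?_, rfl⟩, by simp [add_smul, sum_add_distrib]⟩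
    simp only [Pi.add_apply, Pi.one_apply, sum_add_distrib, sum_const, card_univ,
      Fintype.card_fin, smul_eq_mul, mul_one] at hn
    omega
  · rintro ⟨_, ⟨c, rfl, rfl⟩, rfl⟩
    exact ⟨1 + c, fun j ↦ Nat.le_add_right 1 (c j), by simp [sum_add_distrib, add_comm],
      by simp [add_smul, sum_add_distrib]⟩

theorem shell_fin_one (f : Fin 1 → G) (h : ℕ) : shell f h = {h • f 0} := by
  ext x
  constructor
  · rintro ⟨n, rfl, rfl⟩
    simp
  · rintro rfl
    exact nsmul_mem_shell f 0 h

theorem shellPos_fin_one (f : Fin 1 → G) {h : ℕ} (hh : 0 < h) : shellPos f h = {h • f 0} := by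
  obtain ⟨m, rfl⟩ := Nat.exists_eq_add_one.mpr hh
  rw [shellPos_add_card, shell_fin_one, Set.singleton_add_singleton, Fin.sum_univ_one,
    succ_nsmul']

theorem shell_mul_add_subset (f : Fin k → G) {q N m : ℕ} (hm : k * q ≤ m + q) :
    shell f ((q + 1) * N + m) ⊆ shell ((q + 1) • f) N + shell f m := by
  rintro _ ⟨b, hb, rfl⟩
  obtain ⟨a, c, ha, hc, hbac⟩ := exists_eq_mul_add_of_sum_eq (by rwa [Fintype.card_fin]) hb
  refine Set.mem_add.mpr ⟨_, ⟨a, ha, rfl⟩, _, ⟨c, hc, rfl⟩, ?_⟩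
  simp only [hbac, add_smul, mul_smul, sum_add_distrib, Pi.smul_apply, smul_comm (q + 1)]

theorem exists_finset_coe_eq_shell (f : Fin k → G) (N : ℕ) :
    ∃ S : Finset G, (S : Set G) = shell f N ∧ #S ≤ k.multichoose N := by
  classical
  refine ⟨(finsuppAntidiag univ N).image fun a ↦ ∑ j, a j • f j, ?_, ?_⟩
  · ext x
    simp only [coe_image, Set.mem_image, mem_coe, mem_finsuppAntidiag, subset_univ, and_true]
    constructor
    · rintro ⟨a, ha, rfl⟩
      exact ⟨a, ha, rfl⟩
    · rintro ⟨n, hn, rfl⟩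
      exact ⟨Finsupp.equivFunOnFinite.symm n, by simpa using hn, by simp⟩
  · simpa [card_finsuppAntidiag_nat_eq_multichoose] using
      card_image_le (s := finsuppAntidiag univ N) (f := fun a ↦ ∑ j, a j • f j)

theorem shell_eq_singleton_add_shellPos {r : ℕ} (hr : 0 < r) (f : Fin 1 → G) {h : ℕ}
    (hh : 0 < h) : shell f (r * h) = {((r - 1) * h) • f 0} + shellPos f h := by
  rw [shell_fin_one, shellPos_fin_one f hh, Set.singleton_add_singleton, ← add_smul,
    ← add_one_mul, Nat.sub_one_add_one hr.ne']

end AddCommMonoid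

section AddCommGroup

variable {G : Type*} [AddCommGroup G] {k : ℕ}

theorem shell_subset_add_shellPos (f : Fin k → G) (i : Fin k) {q N m E n : ℕ}
    (hm : k * q ≤ m + q) (hn : n + E = (q + 1) * N + m) :
    shell f n ⊆ {-(E • f i + ∑ j, f j)} + shell ((q + 1) • f) N + shellPos f (m + k) := by
  intro x hx
  have hpad : x + E • f i ∈ shell f ((q + 1) * N + m) :=
    hn ▸ shell_add_shell_subset f n E (Set.add_mem_add hx (nsmul_mem_shell f i E))
  obtain ⟨y, hy, z, hz, hyz⟩ := Set.mem_add.mp (shell_mul_add_subset f hm hpad)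
  rw [shellPos_add_card]
  refine Set.mem_add.mpr ⟨_, Set.add_mem_add rfl hy, _, Set.add_mem_add rfl hz, ?_⟩
  rw [eq_sub_of_add_eq hyz.symm]
  abel

theorem exists_finset_shell_subset_add_shellPos (f : Fin k → G) (hk : 0 < k) {q N m n : ℕ}
    (hm : k * q ≤ m + q) (hn : n ≤ (q + 1) * N + m) :
    ∃ X : Finset G, #X ≤ k.multichoose N ∧ shell f n ⊆ ↑X + shellPos f (m + k) := by
  classical
  obtain ⟨E, hE⟩ := Nat.exists_eq_add_of_le hn
  obtain ⟨S, hS, hcard⟩ := exists_finset_coe_eq_shell ((q + 1) • f) N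
  refine ⟨{-(E • f ⟨0, hk⟩ + ∑ j, f j)} + S, by rwa [card_singleton_add], ?_⟩
  rw [coe_add, coe_singleton, hS]
  exact shell_subset_add_shellPos f ⟨0, hk⟩ hm hE.symm

end AddCommGroup

theorem stmt11_general {G : Type*} [AddCommGroup G] (k r : ℕ) (hr : 0 < r) (f : Fin k → G) :
    (∀ (hk : k = 1) (h : ℕ), 0 < h →
      shell f (r * h) = {((r - 1) * h) • f ⟨0, hk ▸ one_pos⟩} + shellPos f h) ∧
    (2 ≤ k → ∀ h : ℕ, r * (k - 1) + k ≤ h →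
      ∃ X : Finset G, X.card ≤ ((r + 1) * (k - 1)).choose (k - 1) ∧
        shell f (r * h) ⊆ ↑X + shellPos f h) := by
  refine ⟨?_, fun hk h hh ↦ ?_⟩
  · rintro rfl h hh
    exact shell_eq_singleton_add_shellPos hr f hh
  · obtain ⟨d, rfl⟩ : ∃ d, k = d + 1 := Nat.exists_eq_add_one.mpr (by omega)
    obtain ⟨m, rfl⟩ : ∃ m, h = m + (d + 1) := Nat.exists_eq_add_of_le' (by omega)
    rw [Nat.add_sub_cancel] at hh ⊢
    have hdiv : (d + 1) * (m / d) ≤ m + m / d := by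
      rw [add_one_mul]
      gcongr
      exact Nat.mul_div_le m d
    have hcard : (d + 1).multichoose (r * d) = ((r + 1) * d).choose d := by
      rw [Nat.multichoose_eq, add_right_comm, Nat.add_sub_cancel, ← Nat.choose_symm_add,
        add_one_mul, add_comm]
    rw [← hcard]
    exact exists_finset_shell_subset_add_shellPos f d.succ_pos hdiv
      (mul_add_le_div_add_one_mul_add r (by omega) (by omega))

/-- Covering theorem for positive composition shells: for `k = 1`,
`Σ_{rh}(f₁) = {(r−1)h f₁} + Σ_h^+(f₁)` for every `h ≥ 1`; for `k ≥ 2` and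
`h ≥ r(k−1)² + k`, there is `X_h` with `|X_h| ≤ C((r+1)(k−1), k−1)` and
`Σ_{rh} ⊆ X_h + Σ_h^+`. -/
theorem stmt11 {G : Type*} [AddCommGroup G] (k r : ℕ) (hr : 0 < r) (f : Fin k → G) :
    (∀ (hk : k = 1) (h : ℕ), 0 < h →
      shell f (r * h) = {((r - 1) * h) • f ⟨0, by omega⟩} + shellPos f h) ∧
    (2 ≤ k → ∀ h : ℕ, r * (k - 1) ^ 2 + k ≤ h →
      ∃ X : Finset G, X.card ≤ ((r + 1) * (k - 1)).choose (k - 1) ∧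
        shell f (r * h) ⊆ ↑X + shellPos f h) := by
  exact ⟨(stmt11_general k r hr f).1, fun hk h hh ↦ (stmt11_general k r hr f).2 hk h <|
    le_trans (by gcongr; exact Nat.le_self_pow two_ne_zero _) hh⟩
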